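/- Let δ ≥ e and s ≥ 0 be real numbers. Then (δ + δ^{−s} + min(s,1)·ln δ − 1)/ln δ ≤ (δ/(e·ln δ))·(e^{δ^{−s}}/δ^{−s}). -/

import Mathlib

/-!
Put `t = δ ^ (-s)` and `w = t - 1 - log t = t + s * log δ - 1`. Multiplied by `log δ`, the
right-hand side is `δ * exp w`, and the left-hand side is at most `δ + w`. Since `0 ≤ w` and
`1 ≤ δ`, the claim reduces to `δ + w ≤ δ * (1 + w) ≤ δ * exp w`.
-/

theorem exp_sub_one_sub_log {t : ℝ} (ht : 0 < t) :
    Real.exp (t - 1 - Real.log t) = Real.exp t / Real.exp 1 / t := by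
  rw [Real.exp_sub, Real.exp_sub, Real.exp_log ht]

theorem add_le_mul_exp {a w : ℝ} (ha : 1 ≤ a) (hw : 0 ≤ w) : a + w ≤ a * Real.exp w :=
  calc
    a + w ≤ a + a * w := by gcongr; exact le_mul_of_one_le_left hw ha
    _ = a * (w + 1) := by ring
    _ ≤ a * Real.exp w := by gcongr; exact Real.add_one_le_exp w

theorem add_sub_one_sub_log_le_mul_exp_div {a t : ℝ} (ha : 1 ≤ a) (ht : 0 < t) :
    a + (t - 1 - Real.log t) ≤ a * (Real.exp t / Real.exp 1 / t) := by
  have gap_nonneg : 0 ≤ t - 1 - Real.log t := sub_nonneg.2 (Real.log_le_sub_one_of_pos ht)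
  simpa only [exp_sub_one_sub_log ht] using add_le_mul_exp ha gap_nonneg

theorem rand_rob5_general {δ : ℝ} (hδ : 1 < δ) (s : ℝ) :
    (δ + δ ^ (-s) + s * Real.log δ - 1) / Real.log δ ≤
      δ / (Real.exp 1 * Real.log δ) * (Real.exp (δ ^ (-s)) / δ ^ (-s)) := by
  have δ_pos : 0 < δ := zero_lt_one.trans hδ
  have log_pos : 0 < Real.log δ := Real.log_pos hδ
  calc
    (δ + δ ^ (-s) + s * Real.log δ - 1) / Real.log δ
        = (δ + (δ ^ (-s) - 1 - Real.log (δ ^ (-s)))) / Real.log δ := by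
      rw [Real.log_rpow δ_pos]; ring
    _ ≤ δ * (Real.exp (δ ^ (-s)) / Real.exp 1 / δ ^ (-s)) / Real.log δ := by
      gcongr
      exact add_sub_one_sub_log_le_mul_exp_div hδ.le (Real.rpow_pos_of_pos δ_pos _)
    _ = δ / (Real.exp 1 * Real.log δ) * (Real.exp (δ ^ (-s)) / δ ^ (-s)) := by
      ring

theorem rand_rob5 (δ s : ℝ) (hδ : Real.exp 1 ≤ δ) (hs : 0 ≤ s) :
    (δ + δ ^ (-s) + min s 1 * Real.log δ - 1) / Real.log δ ≤
      δ / (Real.exp 1 * Real.log δ) * (Real.exp (δ ^ (-s)) / δ ^ (-s)) := by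
  have one_lt_δ : 1 < δ := (Real.one_lt_exp_iff.2 one_pos).trans_le hδ
  have log_pos : 0 < Real.log δ := Real.log_pos one_lt_δ
  exact le_trans (by gcongr; exact min_le_left s 1) (rand_rob5_general one_lt_δ s)
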